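/- Let G be the free group on generators a_1,…,a_n, let H be a free group, and let φ : G → H be a homomorphism with remnant; set l = min_i |Rem_φ a_i| ≥ 1. Then for every w ∈ H: w lies in the image subgroup φ(G) if and only if there exists z ∈ G with |z| ≤ |w|/l and w = φ(z). In particular, membership in φ(G) is decided by checking the finitely many z of length at most |w|/l. -/

import Mathlib

/-- Half the total cancellation in the product `x * y` of elements of a free group:
`(|x| + |y| - |x*y|) / 2`. -/
def cancelLen {β : Type} [DecidableEq β] (x y : FreeGroup β) : ℕ :=
  (FreeGroup.norm x + FreeGroup.norm y - FreeGroup.norm (x * y)) / 2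

/-- `x` or `x⁻¹`, according to the sign `b` (`true` = exponent `1`, `false` = exponent `-1`). -/
def pmPow {β : Type} [DecidableEq β] (b : Bool) (x : FreeGroup β) : FreeGroup β :=
  if b then x else x⁻¹

/-- The left cancellation `L_i` of the `i`-th entry of the tuple `t`: the maximum of
`(|h_j^α| + |h_i| - |h_j^α * h_i|)/2` over pairs `(j, α)` with `(j, α) ≠ (i, -1)`. -/
def leftCancel {β : Type} [DecidableEq β] {N : ℕ} (t : Fin N → FreeGroup β) (i : Fin N) : ℕ :=
  Finset.univ.sup fun p : Fin N × Bool =>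
    if p.1 = i ∧ p.2 = false then 0 else cancelLen (pmPow p.2 (t p.1)) (t i)

/-- The right cancellation `R_i` of the `i`-th entry of the tuple `t`: the maximum of
`(|h_i| + |h_k^β| - |h_i * h_k^β|)/2` over pairs `(k, β)` with `(k, β) ≠ (i, -1)`. -/
def rightCancel {β : Type} [DecidableEq β] {N : ℕ} (t : Fin N → FreeGroup β) (i : Fin N) : ℕ :=
  Finset.univ.sup fun p : Fin N × Bool =>
    if p.1 = i ∧ p.2 = false then 0 else cancelLen (t i) (pmPow p.2 (t p.1))

/-- The remnant length `|Rem_t h_i| = |h_i| - L_i - R_i` of the `i`-th entry of `t`. -/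
def remLen {β : Type} [DecidableEq β] {N : ℕ} (t : Fin N → FreeGroup β) (i : Fin N) : ℕ :=
  FreeGroup.norm (t i) - leftCancel t i - rightCancel t i

/-- A tuple has remnant if `|h_i| - L_i - R_i ≥ 1` for all `i`. -/
def HasRemnant {β : Type} [DecidableEq β] {N : ℕ} (t : Fin N → FreeGroup β) : Prop :=
  ∀ i, 1 ≤ remLen t i


open FreeGroup in
theorem aux_decomp {β : Type} [DecidableEq β] (A : List (β × Bool)) :
    ∀ B : List (β × Bool), FreeGroup.IsReduced A → FreeGroup.IsReduced B →
    ∃ p q m, A = p ++ q ∧ B = invRev q ++ m ∧ FreeGroup.IsReduced (p ++ m) := by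
  induction A using List.reverseRecOn with
  | nil => intro B _ hB; exact ⟨[], [], B, by simp, by simp, by simpa using hB⟩
  | append_singleton A a ih =>
    intro B hA hB
    by_cases h : FreeGroup.IsReduced ((A ++ [a]) ++ B)
    · exact ⟨A ++ [a], [], B, by simp, by simp, h⟩
    · cases B with
      | nil => simp at h; exact absurd hA h
      | cons b B' =>
        have hb : b = (a.1, !a.2) := by
          by_contra hne
          apply h
          unfold FreeGroup.IsReduced at *
          rw [List.isChain_append]
          refine ⟨hA, hB, ?_⟩
          simp
          intro h1
          by_contra h2
          apply hne
          obtain ⟨b1, b2⟩ := b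
          obtain ⟨a1, a2⟩ := a
          simp at *
          cases a2 <;> cases b2 <;> simp_all
        have hA' : FreeGroup.IsReduced A := by
          unfold FreeGroup.IsReduced at *
          exact (List.isChain_append.1 hA).1
        have hB' : FreeGroup.IsReduced B' := by
          unfold FreeGroup.IsReduced at *
          exact (List.isChain_append (l₁ := [b]).1 hB).2.1
        obtain ⟨p, q, m, e1, e2, e3⟩ := ih B' hA' hB'
        refine ⟨p, q ++ [a], m, by simp [e1], ?_, e3⟩
        simp [e2, hb, invRev]

open FreeGroup in
theorem aux_decomp' {β : Type} [DecidableEq β] (x y : FreeGroup β) :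
    ∃ p q m, x.toWord = p ++ q ∧ y.toWord = invRev q ++ m ∧ (x * y).toWord = p ++ m ∧
      FreeGroup.IsReduced (p ++ m) := by
  obtain ⟨p, q, m, e1, e2, e3⟩ := aux_decomp x.toWord y.toWord isReduced_toWord isReduced_toWord
  refine ⟨p, q, m, e1, e2, ?_, e3⟩
  have : x * y = mk (p ++ m) := by
    rw [← mk_toWord (x := x), ← mk_toWord (x := y), e1, e2]
    simp only [← mul_mk, ← inv_mk]
    group
  rw [this, toWord_mk, e3.reduce_eq]

open FreeGroup in
theorem aux_cancel {β : Type} [DecidableEq β] (x y : FreeGroup β) :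
    FreeGroup.norm x + FreeGroup.norm y = FreeGroup.norm (x * y) + 2 * cancelLen x y := by
  obtain ⟨p, q, m, e1, e2, e3, _⟩ := aux_decomp' x y
  unfold cancelLen FreeGroup.norm
  rw [e1, e2, e3]
  simp
  omega

open FreeGroup in
theorem aux_three {β : Type} [DecidableEq β] (x y z : FreeGroup β)
    (h : cancelLen x y + cancelLen y z < FreeGroup.norm y) :
    FreeGroup.norm (x * y * z) + FreeGroup.norm y = FreeGroup.norm (x * y) + FreeGroup.norm (y * z) := by
  obtain ⟨p, q, m, e1, e2, e3, e4⟩ := aux_decomp' x y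
  obtain ⟨m', s, t, f1, f2, f3, f4⟩ := aux_decomp' y z
  have c1 := aux_cancel x y
  have c2 := aux_cancel y z
  have hlen : q.length + s.length < FreeGroup.norm y := by
    have : FreeGroup.norm x = p.length + q.length := by simp [FreeGroup.norm, e1]
    have : FreeGroup.norm y = q.length + m.length := by simp [FreeGroup.norm, e2]
    have : FreeGroup.norm y = m'.length + s.length := by simp [FreeGroup.norm, f1]
    have : FreeGroup.norm z = s.length + t.length := by simp [FreeGroup.norm, f2]
    have : FreeGroup.norm (x * y) = p.length + m.length := by simp [FreeGroup.norm, e3]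
    have : FreeGroup.norm (y * z) = m'.length + t.length := by simp [FreeGroup.norm, f3]
    omega
  have hy : FreeGroup.norm y = m'.length + s.length := by simp [FreeGroup.norm, f1]
  have heq : invRev q ++ m = m' ++ s := e2.symm.trans f1
  obtain ⟨r, hr1, hr2⟩ : ∃ r, m' = invRev q ++ r ∧ m = r ++ s := by
    rcases List.append_eq_append_iff.1 heq with ⟨r, h1, h2⟩ | ⟨r, h1, h2⟩
    · exact ⟨r, h1, h2⟩
    · have l1 := congrArg List.length h1
      have l2 := congrArg List.length h2
      simp at l1 l2
      omega
  have hr : r ≠ [] := by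
    rintro rfl
    have l1 := congrArg List.length hr1
    simp at l1
    omega
  subst hr1 hr2
  have hred : FreeGroup.IsReduced (p ++ (r ++ t)) := by
    unfold FreeGroup.IsReduced at *
    have g1 : List.IsChain (fun a b : β × Bool => a.1 = b.1 → a.2 = b.2) (p ++ r) := by
      rw [← List.append_assoc] at e4
      exact (List.isChain_append.1 e4).1
    have g2 : List.IsChain (fun a b : β × Bool => a.1 = b.1 → a.2 = b.2) (r ++ t) := by
      rw [List.append_assoc] at f4
      exact (List.isChain_append.1 f4).2.1
    rw [← List.append_assoc]
    exact List.IsChain.append_overlap g1 g2 hr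
  have hprod : x * y * z = mk (p ++ (r ++ t)) := by
    rw [← mk_toWord (x := x * y), e3, ← mk_toWord (x := z), f2]
    simp only [← mul_mk, ← inv_mk]
    group
  have : FreeGroup.norm (x * y * z) = p.length + (r.length + t.length) := by
    rw [hprod, FreeGroup.norm, toWord_mk, hred.reduce_eq]; simp
  rw [this]
  simp [FreeGroup.norm, e2, e3, f3]
  omega

theorem aux_cancel_inv {β : Type} [DecidableEq β] (x y : FreeGroup β) :
    cancelLen y⁻¹ x⁻¹ = cancelLen x y := by
  unfold cancelLen
  rw [← mul_inv_rev]
  simp only [FreeGroup.norm_inv_eq]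
  rw [add_comm]

def auxL {β : Type} [DecidableEq β] {N : ℕ} (t : Fin N → FreeGroup β) (p : Fin N × Bool) : ℕ :=
  if p.2 then leftCancel t p.1 else rightCancel t p.1

def auxR {β : Type} [DecidableEq β] {N : ℕ} (t : Fin N → FreeGroup β) (p : Fin N × Bool) : ℕ :=
  if p.2 then rightCancel t p.1 else leftCancel t p.1

theorem aux_pm_inv {β : Type} [DecidableEq β] (b : Bool) (x : FreeGroup β) :
    (pmPow b x)⁻¹ = pmPow (!b) x := by
  cases b <;> simp [pmPow]

theorem aux_left {β : Type} [DecidableEq β] {N : ℕ} (t : Fin N → FreeGroup β)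
    (i : Fin N) (p : Fin N × Bool) (h : ¬ (p.1 = i ∧ p.2 = false)) :
    cancelLen (pmPow p.2 (t p.1)) (t i) ≤ leftCancel t i := by
  have := Finset.le_sup (f := fun p : Fin N × Bool =>
    if p.1 = i ∧ p.2 = false then 0 else cancelLen (pmPow p.2 (t p.1)) (t i)) (Finset.mem_univ p)
  simp only [if_neg h] at this
  exact this

theorem aux_right {β : Type} [DecidableEq β] {N : ℕ} (t : Fin N → FreeGroup β)
    (i : Fin N) (p : Fin N × Bool) (h : ¬ (p.1 = i ∧ p.2 = false)) :
    cancelLen (t i) (pmPow p.2 (t p.1)) ≤ rightCancel t i := by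
  have := Finset.le_sup (f := fun p : Fin N × Bool =>
    if p.1 = i ∧ p.2 = false then 0 else cancelLen (t i) (pmPow p.2 (t p.1))) (Finset.mem_univ p)
  simp only [if_neg h] at this
  exact this

theorem aux_le_R {β : Type} [DecidableEq β] {N : ℕ} (t : Fin N → FreeGroup β)
    (p q : Fin N × Bool) (h : p.1 = q.1 → p.2 = q.2) :
    cancelLen (pmPow p.2 (t p.1)) (pmPow q.2 (t q.1)) ≤ auxR t p := by
  obtain ⟨i, a⟩ := p
  obtain ⟨j, b⟩ := q
  cases a
  · rw [← aux_cancel_inv, aux_pm_inv, aux_pm_inv]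
    have := aux_left t i (j, !b) (by rintro ⟨h1, h2⟩; simp at h1 h2 h; simp_all)
    simpa [auxR, pmPow] using this
  · have := aux_right t i (j, b) (by rintro ⟨h1, h2⟩; simp at h1 h2 h; simp_all)
    simpa [auxR, pmPow] using this

theorem aux_le_L {β : Type} [DecidableEq β] {N : ℕ} (t : Fin N → FreeGroup β)
    (p q : Fin N × Bool) (h : p.1 = q.1 → p.2 = q.2) :
    cancelLen (pmPow p.2 (t p.1)) (pmPow q.2 (t q.1)) ≤ auxL t q := by
  obtain ⟨i, a⟩ := p
  obtain ⟨j, b⟩ := q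
  have := aux_le_R t (j, !b) (i, !a) (by intro h1; simp at h1 h; simp [h h1.symm])
  rw [← aux_cancel_inv, aux_pm_inv, aux_pm_inv]
  refine this.trans (le_of_eq ?_)
  cases b <;> simp [auxL, auxR]

open FreeGroup in
theorem aux_main {β : Type} [DecidableEq β] {n : ℕ} (φ : FreeGroup (Fin n) →* FreeGroup β)
    (l : ℕ) (hl1 : 1 ≤ l) (t : Fin n → FreeGroup β)
    (hφ : ∀ p : Fin n × Bool, φ (mk [p]) = pmPow p.2 (t p.1))
    (hl : ∀ p : Fin n × Bool, l + auxL t p + auxR t p ≤ FreeGroup.norm (pmPow p.2 (t p.1)))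
    (L : List (Fin n × Bool)) : ∀ (s : Fin n × Bool) (u : FreeGroup β) (k : ℕ),
    l * k + auxR t s ≤ FreeGroup.norm u →
    (∀ s' : Fin n × Bool, (s.1 = s'.1 → s.2 = s'.2) →
      FreeGroup.norm (u * pmPow s'.2 (t s'.1)) + FreeGroup.norm (pmPow s.2 (t s.1)) =
        FreeGroup.norm u + FreeGroup.norm (pmPow s.2 (t s.1) * pmPow s'.2 (t s'.1))) →
    FreeGroup.IsReduced (s :: L) → l * (k + L.length) ≤ FreeGroup.norm (u * φ (mk L)) := by
  induction L with
  | nil =>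
    intro s u k h1 _ _
    have : (mk [] : FreeGroup (Fin n)) = 1 := rfl
    rw [this]
    simp
    omega
  | cons s' L ih =>
    intro s u k h1 h2 h3
    have hss : s.1 = s'.1 → s.2 = s'.2 := by
      unfold FreeGroup.IsReduced at h3
      exact (List.isChain_cons_cons.1 h3).1
    have hr : FreeGroup.IsReduced (s' :: L) := by
      unfold FreeGroup.IsReduced at h3
      exact (List.isChain_cons_cons.1 h3).2
    have e : (mk (s' :: L) : FreeGroup (Fin n)) = mk [s'] * mk L := by simp [mul_mk]
    rw [e, _root_.map_mul, hφ, ← mul_assoc]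
    have a1 := h2 s' hss
    have a2 := aux_cancel (pmPow s.2 (t s.1)) (pmPow s'.2 (t s'.1))
    have a3 := aux_le_L t s s' hss
    have a4 := aux_le_R t s s' hss
    have a5 := hl s'
    have a6 := aux_cancel u (pmPow s'.2 (t s'.1))
    have := ih s' (u * pmPow s'.2 (t s'.1)) (k + 1) (by rw [mul_add]; omega) ?_ hr
    · rw [List.length_cons]
      rwa [show k + (L.length + 1) = k + 1 + L.length by omega]
    · intro s'' hs
      apply aux_three
      have := aux_le_R t s' s'' hs
      omega

open FreeGroup in
theorem aux_bound {β : Type} [DecidableEq β] {n : ℕ} (φ : FreeGroup (Fin n) →* FreeGroup β)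
    (l : ℕ) (hl1 : 1 ≤ l) (t : Fin n → FreeGroup β)
    (hφ : ∀ p : Fin n × Bool, φ (mk [p]) = pmPow p.2 (t p.1))
    (hl : ∀ p : Fin n × Bool, l + auxL t p + auxR t p ≤ FreeGroup.norm (pmPow p.2 (t p.1)))
    (z : FreeGroup (Fin n)) : l * FreeGroup.norm z ≤ FreeGroup.norm (φ z) := by
  have hz : FreeGroup.IsReduced z.toWord := isReduced_toWord
  conv_rhs => rw [← mk_toWord (x := z)]
  unfold FreeGroup.norm
  rcases hL : z.toWord with _ | ⟨s, L⟩
  · simp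
  · rw [hL] at hz
    have e : (mk (s :: L) : FreeGroup (Fin n)) = mk [s] * mk L := by simp [mul_mk]
    have := aux_main φ l hl1 t hφ hl L s (pmPow s.2 (t s.1)) 1 (by have := hl s; omega)
      (by intro s' _; omega) hz
    rw [e, _root_.map_mul, hφ, List.length_cons, add_comm L.length]
    exact this

/-- Let `φ : G → H` be a homomorphism of free groups with remnant, and
set `l = min_i |Rem_φ a_i| ≥ 1`. Then `w ∈ φ(G)` if and only if there is `z` with
`|z| ≤ |w| / l` and `w = φ(z)`; so membership in the image subgroup `φ(G)` is decided
by finitely many checks. -/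
theorem image_membership_decision {n : ℕ} {β : Type} [DecidableEq β] (hn : 0 < n)
    (φ : FreeGroup (Fin n) →* FreeGroup β)
    (hrem : HasRemnant fun i : Fin n => φ (FreeGroup.of i))
    (l : ℕ)
    (hl : l = Finset.univ.inf'
      (⟨⟨0, hn⟩, Finset.mem_univ _⟩ : (Finset.univ : Finset (Fin n)).Nonempty)
      (fun i => remLen (fun j : Fin n => φ (FreeGroup.of j)) i))
    (w : FreeGroup β) :
    w ∈ φ.range ↔
      ∃ z : FreeGroup (Fin n),
        (FreeGroup.norm z : ℝ) ≤ (FreeGroup.norm w : ℝ) / l ∧ w = φ z := by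
  constructor
  · rintro ⟨z, rfl⟩
    refine ⟨z, ?_, rfl⟩
    have hle : ∀ i, l ≤ remLen (fun j : Fin n => φ (FreeGroup.of j)) i := by
      intro i
      rw [hl]
      exact Finset.inf'_le _ (Finset.mem_univ i)
    have hl1 : 1 ≤ l := by
      rw [hl]
      exact Finset.le_inf' _ _ (fun i _ => hrem i)
    have key := aux_bound φ l hl1 (fun j : Fin n => φ (FreeGroup.of j)) ?_ ?_ z
    · rw [le_div_iff₀ (by exact_mod_cast hl1)]
      rw [mul_comm]
      exact_mod_cast key
    · rintro ⟨i, b⟩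
      cases b
      · simp only [pmPow, Bool.false_eq_true, if_false, ← map_inv]
        rfl
      · rfl
    · rintro ⟨i, b⟩
      have h1 := hle i
      unfold remLen at h1
      beta_reduce at h1
      cases b
      · simp only [pmPow, auxL, auxR, Bool.false_eq_true, if_false, FreeGroup.norm_inv_eq]
        omega
      · simp only [pmPow, auxL, auxR, if_true]
        omega
  · rintro ⟨z, _, rfl⟩
    exact ⟨z, rfl⟩
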